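/- Let β > 0 and let p be the probability mass function on ℤ proportional to e^{−βj²} (the discrete Gaussian increment law). Then the moment generating function ψ(s) := Σ_{j∈ℤ} e^{sj} p(j) is finite for every s ∈ ℝ and equals ψ(s) = e^{s²/(4β)} · ( Σ_{j∈ℤ} e^{−β(j − s/(2β))²} ) / ( Σ_{j∈ℤ} e^{−βj²} ). Consequently, for every integer d ≥ 2, the almost-sure limit H of the spherical averages H_r of the free height field with increment law p on the rooted Cayley tree of order d satisfies super-exponential concentration: for every A > 0 there exists B = B(A) < ∞ with P(|H| ≥ s) ≤ B e^{−As} for all real s ≥ 0. -/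

import Mathlib

open MeasureTheory ProbabilityTheory Filter Finset Topology

noncomputable section

/-- A non-root vertex of the rooted Cayley tree of order `d`: the first step from the
root is one of `d+1` children, every further step one of `d` children. -/
abbrev Vertex (d : ℕ) : Type := Fin (d + 1) × List (Fin d)

/-- depth of a non-root vertex -/
def vdepth {d : ℕ} (v : Vertex d) : ℕ := v.2.length + 1

/-- the sphere `W_r` of radius `r ≥ 1`: all vertices of depth `r` -/
def sphereW (d r : ℕ) : Finset (Vertex d) :=
  (Finset.univ : Finset (Fin (d + 1) × (Fin (r - 1) → Fin d))).image
    (fun x => (x.1, List.ofFn x.2))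

/-- height at `v`: sum of the increments along the path from the root to `v`
(the prefixes of length `0,…,|v.2|` of the step list of `v` enumerate that path). -/
def heightAt {d : ℕ} {Ω : Type*} (Y : Vertex d → Ω → ℝ) (v : Vertex d) (ω : Ω) : ℝ :=
  ∑ k ∈ Finset.range (v.2.length + 1), Y (v.1, v.2.take k) ω

/-- spherical average `H_r` of the heights at depth `r` -/
def sphAvg (d : ℕ) {Ω : Type*} (Y : Vertex d → Ω → ℝ) (r : ℕ) (ω : Ω) : ℝ :=
  (((d + 1) * d ^ (r - 1) : ℕ) : ℝ)⁻¹ * ∑ v ∈ sphereW d r, heightAt Y v ω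

/-!
By Poisson summation, `∑ⱼ e^{-β(j-c)²}` is, up to a positive factor, a trigonometric series in `c`
with positive coefficients, so it is largest at `c = 0`. Completing the square then gives
`ψ(s) ≤ e^{s²/(4β)}`: the increments are sub-Gaussian with variance proxy `1/(2β)`.

Each increment `Y_v` enters `H_r`, for `r ≥ |v|`, with weight `1/|W_{|v|}|`, and the squares of
these weights add up to `∑ₖ 1/|W_k| ≤ ∑ₖ 2⁻ᵏ = 1`. Hence all `H_r` are sub-Gaussian with the proxy
of a single increment, Fatou's lemma carries this over to `H`, and the Chernoff bound at `A`
concludes.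
-/

open scoped NNReal ENNReal Real

section PeriodizedGaussian

variable {β : ℝ}

lemma exp_mul_exp_neg_mul_sq (hβ : β ≠ 0) (s x : ℝ) :
    Real.exp (s * x) * Real.exp (-β * x ^ 2) =
      Real.exp (s ^ 2 / (4 * β)) * Real.exp (-β * (x - s / (2 * β)) ^ 2) := by
  rw [← Real.exp_add, ← Real.exp_add]
  congr 1
  field_simp
  ring

lemma summable_exp_mul_exp_neg_mul_int_sq (hβ : 0 < β) (s : ℝ) :
    Summable fun j : ℤ => Real.exp (s * j) * Real.exp (-β * (j : ℝ) ^ 2) := by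
  have h := (summable_jacobiTheta₂_term_iff (((-s / (2 * π) : ℝ) : ℂ) * Complex.I)
    (((β / π : ℝ) : ℂ) * Complex.I)).2 (by
      simpa only [Complex.im_ofReal_mul, Complex.I_im, mul_one] using div_pos hβ Real.pi_pos)
  refine h.norm.congr fun j => ?_
  rw [norm_jacobiTheta₂_term, ← Real.exp_add]
  congr 1
  simp only [Complex.im_ofReal_mul, Complex.I_im, mul_one]
  field_simp
  ring

lemma summable_exp_neg_mul_int_sq (hβ : 0 < β) :
    Summable fun j : ℤ => Real.exp (-β * (j : ℝ) ^ 2) := by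
  simpa only [zero_mul, Real.exp_zero, one_mul] using summable_exp_mul_exp_neg_mul_int_sq hβ 0

lemma tsum_exp_neg_mul_int_sq_pos (hβ : 0 < β) : 0 < ∑' j : ℤ, Real.exp (-β * (j : ℝ) ^ 2) :=
  (summable_exp_neg_mul_int_sq hβ).tsum_pos (fun _ => (Real.exp_pos _).le) 0 (Real.exp_pos _)

lemma norm_cexp_neg_quadratic_mul_I (a x : ℝ) (n : ℤ) :
    ‖Complex.exp (-π * a * n ^ 2 + 2 * π * (x * Complex.I) * n)‖ =
      Real.exp (-π * a * (n : ℝ) ^ 2) := by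
  have hsplit : (-π * a * n ^ 2 + 2 * π * (x * Complex.I) * n : ℂ) =
      ((-π * a * (n : ℝ) ^ 2 : ℝ) : ℂ) + ((2 * π * x * n : ℝ) : ℂ) * Complex.I := by
    push_cast
    ring
  rw [Complex.norm_exp, hsplit, Complex.add_re, Complex.re_ofReal_mul, Complex.ofReal_re,
    Complex.I_re, mul_zero, add_zero]

lemma tsum_cexp_neg_quadratic_mul_I {a : ℝ} (ha : 0 < a) (x : ℝ) :
    ∑' n : ℤ, Complex.exp (-π * a * n ^ 2 + 2 * π * (x * Complex.I) * n) =
      ((1 / a ^ (1 / 2 : ℝ) * ∑' j : ℤ, Real.exp (-π / a * ((j : ℝ) - x) ^ 2) : ℝ) : ℂ) := by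
  have hshift : Complex.I * (x * Complex.I) = -x := by
    linear_combination (x : ℂ) * Complex.I_mul_I
  rw [Complex.tsum_exp_neg_quadratic (by rwa [Complex.ofReal_re]), hshift]
  push_cast [Complex.ofReal_cpow ha.le]
  simp only [sub_eq_add_neg]

lemma tsum_exp_neg_mul_int_sub_sq_le (hβ : 0 < β) (c : ℝ) :
    ∑' j : ℤ, Real.exp (-β * ((j : ℝ) - c) ^ 2) ≤ ∑' j : ℤ, Real.exp (-β * (j : ℝ) ^ 2) := by
  obtain ⟨a, ha, rfl⟩ : ∃ a : ℝ, 0 < a ∧ β = π / a :=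
    ⟨π / β, div_pos Real.pi_pos hβ, (div_div_cancel₀ Real.pi_ne_zero).symm⟩
  have hsum : Summable fun n : ℤ => Real.exp (-π * a * (n : ℝ) ^ 2) := by
    simpa only [neg_mul] using summable_exp_neg_mul_int_sq (mul_pos Real.pi_pos ha)
  have hfactor : 0 < 1 / a ^ (1 / 2 : ℝ) := by positivity
  rw [← neg_div]
  refine le_of_mul_le_mul_left ?_ hfactor
  calc 1 / a ^ (1 / 2 : ℝ) * ∑' j : ℤ, Real.exp (-π / a * ((j : ℝ) - c) ^ 2)
      ≤ ‖∑' n : ℤ, Complex.exp (-π * a * n ^ 2 + 2 * π * (c * Complex.I) * n)‖ := by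
        rw [tsum_cexp_neg_quadratic_mul_I ha, Complex.norm_real]
        exact Real.le_norm_self _
    _ ≤ ∑' n : ℤ, Real.exp (-π * a * (n : ℝ) ^ 2) := by
        simp only [← norm_cexp_neg_quadratic_mul_I a c] at hsum ⊢
        exact norm_tsum_le_tsum_norm hsum
    _ = 1 / a ^ (1 / 2 : ℝ) * ∑' j : ℤ, Real.exp (-π / a * (j : ℝ) ^ 2) :=
        Real.tsum_exp_neg_mul_int_sq ha

end PeriodizedGaussian

section DiscreteGaussian

variable {β : ℝ}

/-- The probability mass function of the centred discrete Gaussian law on `ℤ`, as a real-valued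
function. For `β ≤ 0` the normalizing series diverges and the junk value is `0`. -/
def discreteGaussianPMFReal (β : ℝ) (j : ℤ) : ℝ :=
  Real.exp (-β * (j : ℝ) ^ 2) / ∑' k : ℤ, Real.exp (-β * (k : ℝ) ^ 2)

lemma discreteGaussianPMFReal_nonneg (β : ℝ) (j : ℤ) : 0 ≤ discreteGaussianPMFReal β j :=
  div_nonneg (Real.exp_pos _).le (tsum_nonneg fun _ => (Real.exp_pos _).le)

lemma summable_exp_mul_discreteGaussianPMFReal (hβ : 0 < β) (s : ℝ) :
    Summable fun j : ℤ => Real.exp (s * j) * discreteGaussianPMFReal β j := by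
  simp only [discreteGaussianPMFReal, ← mul_div_assoc]
  exact (summable_exp_mul_exp_neg_mul_int_sq hβ s).div_const _

lemma tsum_exp_mul_discreteGaussianPMFReal (hβ : β ≠ 0) (s : ℝ) :
    ∑' j : ℤ, Real.exp (s * j) * discreteGaussianPMFReal β j =
      Real.exp (s ^ 2 / (4 * β)) * (∑' j : ℤ, Real.exp (-β * ((j : ℝ) - s / (2 * β)) ^ 2)) /
        ∑' j : ℤ, Real.exp (-β * (j : ℝ) ^ 2) := by
  simp only [discreteGaussianPMFReal, ← mul_div_assoc, exp_mul_exp_neg_mul_sq hβ]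
  rw [tsum_div_const, tsum_mul_left]

lemma tsum_exp_mul_discreteGaussianPMFReal_le (hβ : 0 < β) (s : ℝ) :
    ∑' j : ℤ, Real.exp (s * j) * discreteGaussianPMFReal β j ≤ Real.exp (s ^ 2 / (4 * β)) := by
  rw [tsum_exp_mul_discreteGaussianPMFReal hβ.ne', div_le_iff₀ (tsum_exp_neg_mul_int_sq_pos hβ)]
  exact mul_le_mul_of_nonneg_left (tsum_exp_neg_mul_int_sub_sq_le hβ _) (Real.exp_pos _).le

lemma hasSubgaussianMGF_discreteGaussian (hβ : 0 < β) {μ : Measure ℤ}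
    (hμ : ∀ j, μ {j} = ENNReal.ofReal (discreteGaussianPMFReal β j)) :
    HasSubgaussianMGF (fun j : ℤ => (j : ℝ)) (Real.toNNReal (1 / (2 * β))) μ := by
  have hmass (j : ℤ) : μ.real {j} = discreteGaussianPMFReal β j := by
    rw [measureReal_def, hμ, ENNReal.toReal_ofReal (discreteGaussianPMFReal_nonneg β j)]
  have hint (t : ℝ) : Integrable (fun j : ℤ => Real.exp (t * j)) μ := by
    rw [← Measure.sum_smul_dirac μ, integrable_sum_dirac_iff fun j => by simp [hμ]]
    simpa only [← measureReal_def, hmass, Real.norm_eq_abs, Real.abs_exp, mul_comm]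
      using summable_exp_mul_discreteGaussianPMFReal hβ t
  refine ⟨hint, fun t => ?_⟩
  have hmgf : mgf (fun j : ℤ => (j : ℝ)) μ t =
      ∑' j : ℤ, Real.exp (t * j) * discreteGaussianPMFReal β j := by
    simp only [mgf, integral_countable (hint t), hmass, smul_eq_mul, mul_comm]
  have hproxy : (Real.toNNReal (1 / (2 * β)) : ℝ) * t ^ 2 / 2 = t ^ 2 / (4 * β) := by
    rw [Real.coe_toNNReal _ (by positivity)]
    ring
  rw [hmgf, hproxy]
  exact tsum_exp_mul_discreteGaussianPMFReal_le hβ t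

end DiscreteGaussian

section Subgaussian

variable {Ω ι : Type*} [MeasurableSpace Ω] {μ : Measure Ω}

lemma hasSubgaussianMGF_mono {X : Ω → ℝ} {c c' : ℝ≥0} (hX : HasSubgaussianMGF X c μ)
    (hc : c ≤ c') : HasSubgaussianMGF X c' μ :=
  ⟨hX.integrable_exp_mul, fun t => (hX.mgf_le t).trans (by gcongr)⟩

lemma hasSubgaussianMGF_sum_mul {X : ι → Ω → ℝ} {c : ι → ℝ≥0} {s : Finset ι} (w : ι → ℝ)
    (hindep : iIndepFun X μ) (hX : ∀ i ∈ s, HasSubgaussianMGF (X i) (c i) μ) :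
    HasSubgaussianMGF (fun ω => ∑ i ∈ s, w i * X i ω) (∑ i ∈ s, ‖w i‖₊ ^ 2 * c i) μ := by
  refine HasSubgaussianMGF.sum_of_iIndepFun
    (hindep.comp (fun i x => w i * x) fun i => measurable_const_mul _) fun i hi => ?_
  have hw : (⟨w i ^ 2, sq_nonneg _⟩ : ℝ≥0) = ‖w i‖₊ ^ 2 :=
    NNReal.eq (show w i ^ 2 = ((‖w i‖₊ ^ 2 : ℝ≥0) : ℝ) by simp)
  exact hw ▸ (hX i hi).const_mul (w i)

lemma lintegral_le_of_tendsto {u : Filter ι} [u.NeBot] [u.IsCountablyGenerated]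
    {f : ι → Ω → ℝ≥0∞} {g : Ω → ℝ≥0∞} {K : ℝ≥0∞} (hf : ∀ i, AEMeasurable (f i) μ)
    (hle : ∀ i, ∫⁻ ω, f i ω ∂μ ≤ K) (hlim : ∀ᵐ ω ∂μ, Tendsto (fun i => f i ω) u (𝓝 (g ω))) :
    ∫⁻ ω, g ω ∂μ ≤ K :=
  calc ∫⁻ ω, g ω ∂μ
      = ∫⁻ ω, liminf (fun i => f i ω) u ∂μ :=
        lintegral_congr_ae (hlim.mono fun _ h => h.liminf_eq.symm)
    _ ≤ liminf (fun i => ∫⁻ ω, f i ω ∂μ) u := lintegral_liminf_le' hf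
    _ ≤ K := liminf_le_of_frequently_le' (Frequently.of_forall hle)

lemma hasSubgaussianMGF_of_tendsto {u : Filter ι} [u.NeBot] [u.IsCountablyGenerated]
    {X : ι → Ω → ℝ} {Z : Ω → ℝ} {c : ℝ≥0} (hX : ∀ i, HasSubgaussianMGF (X i) c μ)
    (hlim : ∀ᵐ ω ∂μ, Tendsto (fun i => X i ω) u (𝓝 (Z ω))) : HasSubgaussianMGF Z c μ := by
  have hZ : AEMeasurable Z μ := aemeasurable_of_tendsto_metrizable_ae u
    (fun i => (hX i).aemeasurable) hlim
  have hexp_nonneg (W : Ω → ℝ) (t : ℝ) : 0 ≤ᵐ[μ] fun ω => Real.exp (t * W ω) :=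
    ae_of_all _ fun _ => (Real.exp_pos _).le
  have hbound (t : ℝ) : ∫⁻ ω, ENNReal.ofReal (Real.exp (t * Z ω)) ∂μ ≤
      ENNReal.ofReal (Real.exp (c * t ^ 2 / 2)) := by
    refine lintegral_le_of_tendsto (u := u)
      (fun i => ((hX i).integrable_exp_mul t).aemeasurable.ennreal_ofReal) (fun i => ?_)
      (hlim.mono fun ω hω => ENNReal.tendsto_ofReal
        ((Real.continuous_exp.tendsto _).comp (hω.const_mul t)))
    rw [← ofReal_integral_eq_lintegral_ofReal ((hX i).integrable_exp_mul t) (hexp_nonneg _ t)]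
    exact ENNReal.ofReal_le_ofReal ((hX i).mgf_le t)
  have hmeas (t : ℝ) : AEStronglyMeasurable (fun ω => Real.exp (t * Z ω)) μ :=
    (Real.measurable_exp.comp_aemeasurable (hZ.const_mul t)).aestronglyMeasurable
  refine ⟨fun t => ⟨hmeas t, ?_⟩, fun t => ?_⟩
  · rw [hasFiniteIntegral_iff_ofReal (hexp_nonneg Z t)]
    exact (hbound t).trans_lt ENNReal.ofReal_lt_top
  · rw [mgf, integral_eq_lintegral_of_nonneg_ae (hexp_nonneg Z t) (hmeas t)]
    exact ENNReal.toReal_le_of_le_ofReal (Real.exp_pos _).le (hbound t)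

lemma measureReal_abs_ge_le_exp_mul_mgf [IsFiniteMeasure μ] {X : Ω → ℝ} {t : ℝ} (ht : 0 ≤ t)
    (hint_pos : Integrable (fun ω => Real.exp (t * X ω)) μ)
    (hint_neg : Integrable (fun ω => Real.exp (-t * X ω)) μ) (s : ℝ) :
    μ.real {ω | s ≤ |X ω|} ≤ Real.exp (-t * s) * (mgf X μ t + mgf X μ (-t)) := by
  have hunion : {ω | s ≤ |X ω|} = {ω | s ≤ X ω} ∪ {ω | X ω ≤ -s} := by
    ext ω
    simp only [Set.mem_ofPred_eq, Set.mem_union, le_abs, le_neg]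
  calc μ.real {ω | s ≤ |X ω|}
      ≤ μ.real {ω | s ≤ X ω} + μ.real {ω | X ω ≤ -s} := hunion ▸ measureReal_union_le _ _
    _ ≤ Real.exp (-t * s) * mgf X μ t + Real.exp (- -t * -s) * mgf X μ (-t) :=
        add_le_add (measure_ge_le_exp_mul_mgf s ht hint_pos)
          (measure_le_le_exp_mul_mgf (-s) (neg_nonpos.2 ht) hint_neg)
    _ = Real.exp (-t * s) * (mgf X μ t + mgf X μ (-t)) := by rw [neg_mul_neg, mul_add]

lemma measure_abs_ge_le_of_hasSubgaussianMGF [IsFiniteMeasure μ] {X : Ω → ℝ} {c : ℝ≥0}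
    (hX : HasSubgaussianMGF X c μ) {t : ℝ} (ht : 0 ≤ t) (s : ℝ) :
    μ {ω | s ≤ |X ω|} ≤
      ENNReal.ofReal (2 * Real.exp (c * t ^ 2 / 2) * Real.exp (-t * s)) := by
  rw [← ofReal_measureReal]
  refine ENNReal.ofReal_le_ofReal ?_
  calc μ.real {ω | s ≤ |X ω|}
      ≤ Real.exp (-t * s) * (mgf X μ t + mgf X μ (-t)) :=
        measureReal_abs_ge_le_exp_mul_mgf ht (hX.integrable_exp_mul t)
          (hX.integrable_exp_mul (-t)) s
    _ ≤ Real.exp (-t * s) * (Real.exp (c * t ^ 2 / 2) + Real.exp (c * (-t) ^ 2 / 2)) := by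
        gcongr
        exacts [hX.mgf_le t, hX.mgf_le (-t)]
    _ = 2 * Real.exp (c * t ^ 2 / 2) * Real.exp (-t * s) := by
        rw [neg_sq]
        ring

end Subgaussian

section CayleyTree

variable {d : ℕ}

lemma ofFn_snoc {α : Type*} {n : ℕ} (g : Fin n → α) (x : α) :
    List.ofFn (Fin.snoc g x : Fin (n + 1) → α) = List.ofFn g ++ [x] := by
  rw [List.ofFn_succ', List.concat_eq_append]
  simp only [Fin.snoc_castSucc, Fin.snoc_last]

/-- The `x`-th child of a non-root vertex. -/
def child (v : Vertex d) (x : Fin d) : Vertex d := (v.1, v.2 ++ [x])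

lemma heightAt_of_vdepth_eq_one {Ω : Type*} (Y : Vertex d → Ω → ℝ) {v : Vertex d}
    (hv : vdepth v = 1) (ω : Ω) : heightAt Y v ω = Y v ω := by
  obtain ⟨a, l⟩ := v
  obtain rfl : l = [] := List.eq_nil_of_length_eq_zero (Nat.succ_injective hv)
  simp [heightAt]

lemma heightAt_child {Ω : Type*} (Y : Vertex d → Ω → ℝ) (v : Vertex d) (x : Fin d) (ω : Ω) :
    heightAt Y (child v x) ω = heightAt Y v ω + Y (child v x) ω := by
  simp only [heightAt, child, List.length_append, List.length_singleton]
  rw [Finset.sum_range_succ, List.take_of_length_le (by simp)]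
  congr 1
  refine Finset.sum_congr rfl fun k hk => ?_
  rw [List.take_append_of_le_length (Nat.lt_succ_iff.1 (Finset.mem_range.1 hk))]

lemma sum_sphereW {M : Type*} [AddCommMonoid M] (r : ℕ) (f : Vertex d → M) :
    ∑ v ∈ sphereW d r, f v =
      ∑ x : Fin (d + 1) × (Fin (r - 1) → Fin d), f (x.1, List.ofFn x.2) := by
  refine Finset.sum_image fun x _ y _ hxy => ?_
  rw [Prod.mk.injEq] at hxy
  exact Prod.ext hxy.1 (List.ofFn_injective hxy.2)

lemma sum_sphereW_succ {M : Type*} [AddCommMonoid M] (n : ℕ) (f : Vertex d → M) :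
    ∑ v ∈ sphereW d (n + 2), f v = ∑ v ∈ sphereW d (n + 1), ∑ x, f (child v x) := by
  rw [sum_sphereW, sum_sphereW, ← Fintype.sum_prod_type']
  let e : (Fin (d + 1) × (Fin n → Fin d)) × Fin d ≃ Fin (d + 1) × (Fin (n + 1) → Fin d) :=
    (Equiv.prodAssoc _ _ _).trans ((Equiv.refl _).prodCongr
      ((Equiv.prodComm _ _).trans (Fin.snocEquiv fun _ => Fin d)))
  exact (Fintype.sum_equiv e _ _ fun y =>
    congrArg (fun l => f (y.1.1, l)) (ofFn_snoc y.1.2 y.2).symm).symm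

lemma card_sphereW (d r : ℕ) : #(sphereW d r) = (d + 1) * d ^ (r - 1) := by
  rw [Finset.card_eq_sum_ones, sum_sphereW]
  simp

lemma vdepth_of_mem_sphereW {n : ℕ} {v : Vertex d} (hv : v ∈ sphereW d (n + 1)) :
    vdepth v = n + 1 := by
  obtain ⟨x, -, rfl⟩ := Finset.mem_image.1 hv
  simp [vdepth]

lemma two_pow_le_card_sphereW (hd : 2 ≤ d) (n : ℕ) : 2 ^ (n + 1) ≤ #(sphereW d (n + 1)) := by
  rw [card_sphereW, Nat.add_sub_cancel, pow_succ']
  gcongr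
  omega

/-- The non-root vertices of depth at most `n`. -/
def ballW (d n : ℕ) : Finset (Vertex d) :=
  (Finset.range n).biUnion fun k => sphereW d (k + 1)

lemma sum_ballW {M : Type*} [AddCommMonoid M] (n : ℕ) (f : Vertex d → M) :
    ∑ v ∈ ballW d n, f v = ∑ k ∈ Finset.range n, ∑ v ∈ sphereW d (k + 1), f v := by
  refine Finset.sum_biUnion fun i _ j _ hij => Finset.disjoint_left.2 fun v hi hj => hij ?_
  exact Nat.succ_injective ((vdepth_of_mem_sphereW hi).symm.trans (vdepth_of_mem_sphereW hj))

/-- The weight `1 / |W_{|v|}|` of the increment at `v` in every spherical average `H_r` with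
`r ≥ |v|`. -/
def sphereWeight (v : Vertex d) : ℝ := (#(sphereW d (vdepth v)) : ℝ)⁻¹

lemma sphereWeight_of_mem {n : ℕ} {v : Vertex d} (hv : v ∈ sphereW d (n + 1)) :
    sphereWeight v = (#(sphereW d (n + 1)) : ℝ)⁻¹ := by
  rw [sphereWeight, vdepth_of_mem_sphereW hv]

lemma sum_sphereWeight_sq_sphereW (hd : d ≠ 0) (n : ℕ) :
    ∑ v ∈ sphereW d (n + 1), sphereWeight v ^ 2 = (#(sphereW d (n + 1)) : ℝ)⁻¹ := by
  have hcard : (#(sphereW d (n + 1)) : ℝ) ≠ 0 := by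
    rw [card_sphereW]
    positivity
  rw [Finset.sum_congr rfl fun v hv => by rw [sphereWeight_of_mem hv], Finset.sum_const,
    nsmul_eq_mul, sq, mul_inv_cancel_left₀ hcard]

lemma sum_sphereWeight_sq_ballW_le_one (hd : 2 ≤ d) (n : ℕ) :
    ∑ v ∈ ballW d n, sphereWeight v ^ 2 ≤ 1 :=
  calc ∑ v ∈ ballW d n, sphereWeight v ^ 2
      = ∑ k ∈ Finset.range n, (#(sphereW d (k + 1)) : ℝ)⁻¹ := by
        simp only [sum_ballW, sum_sphereWeight_sq_sphereW (show d ≠ 0 by omega)]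
    _ ≤ ∑ k ∈ Finset.range n, (1 / 2) * (1 / 2 : ℝ) ^ k := by
        gcongr with k
        rw [← pow_succ', one_div, inv_pow]
        exact inv_anti₀ (by positivity) (mod_cast two_pow_le_card_sphereW hd k)
    _ ≤ 1 := by
        rw [← Finset.mul_sum]
        linarith [sum_geometric_two_le n]

variable {Ω : Type*}

lemma sum_heightAt_sphereW_succ (Y : Vertex d → Ω → ℝ) (n : ℕ) (ω : Ω) :
    ∑ v ∈ sphereW d (n + 2), heightAt Y v ω =
      d * ∑ v ∈ sphereW d (n + 1), heightAt Y v ω + ∑ v ∈ sphereW d (n + 2), Y v ω := by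
  simp only [sum_sphereW_succ, heightAt_child, Finset.sum_add_distrib, Finset.sum_const,
    Finset.card_univ, Fintype.card_fin, nsmul_eq_mul, Finset.mul_sum]

lemma sphAvg_one (Y : Vertex d → Ω → ℝ) (ω : Ω) :
    sphAvg d Y 1 ω = ∑ v ∈ sphereW d 1, sphereWeight v * Y v ω := by
  rw [sphAvg, ← card_sphereW, Finset.mul_sum]
  refine Finset.sum_congr rfl fun v hv => ?_
  rw [sphereWeight_of_mem hv, heightAt_of_vdepth_eq_one Y (vdepth_of_mem_sphereW hv)]

lemma sphAvg_succ (hd : d ≠ 0) (Y : Vertex d → Ω → ℝ) (n : ℕ) (ω : Ω) :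
    sphAvg d Y (n + 2) ω =
      sphAvg d Y (n + 1) ω + ∑ v ∈ sphereW d (n + 2), sphereWeight v * Y v ω := by
  have hweights : ∑ v ∈ sphereW d (n + 2), sphereWeight v * Y v ω =
      (#(sphereW d (n + 2)) : ℝ)⁻¹ * ∑ v ∈ sphereW d (n + 2), Y v ω := by
    rw [Finset.mul_sum]
    exact Finset.sum_congr rfl fun v hv => by rw [sphereWeight_of_mem hv]
  have hcard : (#(sphereW d (n + 2)) : ℝ) = #(sphereW d (n + 1)) * d := by
    rw [card_sphereW, card_sphereW, Nat.add_sub_cancel, show n + 2 - 1 = n + 1 from rfl, pow_succ]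
    push_cast
    ring
  rw [hweights, sphAvg, sphAvg, ← card_sphereW, ← card_sphereW, sum_heightAt_sphereW_succ, hcard]
  field_simp

lemma sphAvg_eq_sum_ballW (hd : d ≠ 0) (Y : Vertex d → Ω → ℝ) (n : ℕ) (ω : Ω) :
    sphAvg d Y (n + 1) ω = ∑ v ∈ ballW d (n + 1), sphereWeight v * Y v ω := by
  rw [sum_ballW]
  induction n with
  | zero => rw [sphAvg_one, zero_add, Finset.sum_range_one]
  | succ n ih => rw [sphAvg_succ hd, ih, Finset.sum_range_succ _ (n + 1)]

variable [MeasurableSpace Ω] {μ : Measure Ω}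

lemma hasSubgaussianMGF_sphAvg (hd : 2 ≤ d) {c : ℝ≥0} {Y : Vertex d → Ω → ℝ}
    (hindep : iIndepFun Y μ) (hY : ∀ v, HasSubgaussianMGF (Y v) c μ) (n : ℕ) :
    HasSubgaussianMGF (sphAvg d Y (n + 1)) c μ := by
  rw [funext (sphAvg_eq_sum_ballW (show d ≠ 0 by omega) Y n)]
  refine hasSubgaussianMGF_mono (hasSubgaussianMGF_sum_mul sphereWeight hindep fun v _ => hY v) ?_
  have hweights : ∑ v ∈ ballW d (n + 1), ‖sphereWeight v‖₊ ^ 2 ≤ 1 := by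
    rw [← NNReal.coe_le_coe]
    simpa using sum_sphereWeight_sq_ballW_le_one hd (n + 1)
  rw [← Finset.sum_mul]
  exact mul_le_of_le_one_left' hweights

lemma hasSubgaussianMGF_of_tendsto_sphAvg (hd : 2 ≤ d) {c : ℝ≥0} {Y : Vertex d → Ω → ℝ}
    (hindep : iIndepFun Y μ) (hY : ∀ v, HasSubgaussianMGF (Y v) c μ) {H : Ω → ℝ}
    (hH : ∀ᵐ ω ∂μ, Tendsto (fun r => sphAvg d Y r ω) atTop (𝓝 (H ω))) :
    HasSubgaussianMGF H c μ :=
  hasSubgaussianMGF_of_tendsto (hasSubgaussianMGF_sphAvg hd hindep hY)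
    (hH.mono fun _ hω => hω.comp (tendsto_add_atTop_nat 1))

end CayleyTree

/-- For the discrete Gaussian increment law `p(j) = e^{-βj²}/Z`, the mgf
`ψ(s) = Σ_j e^{sj} p(j)` is finite for all `s` and equals
`e^{s²/(4β)} · Σ_j e^{-β(j-s/(2β))²} / Σ_j e^{-βj²}`; consequently, on the rooted Cayley tree
of order `d ≥ 2`, the a.s. limit `H` of the spherical averages of the free height field has
super-exponential tails: for every `A > 0`, `P(|H| ≥ s) ≤ B(A) e^{-As}` for all `s ≥ 0`. -/
theorem discrete_gaussian_mgf_and_superexponential_tail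
    {Ω : Type} [MeasurableSpace Ω] (P : Measure Ω) [IsProbabilityMeasure P]
    (d : ℕ) (hd : 2 ≤ d)
    (β : ℝ) (hβ : 0 < β)
    (p : ℤ → ℝ)
    (hp : ∀ j : ℤ, p j = Real.exp (-β * (j : ℝ) ^ 2) / ∑' k : ℤ, Real.exp (-β * (k : ℝ) ^ 2))
    (Y : Vertex d → Ω → ℤ) (hmeas : ∀ v, Measurable (Y v))
    (hindep : iIndepFun Y P)
    (hlaw : ∀ v (j : ℤ), P {ω | Y v ω = j} = ENNReal.ofReal (p j))
    (H : Ω → ℝ) (hHmeas : Measurable H)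
    (hH : ∀ᵐ ω ∂P, Tendsto (fun r => sphAvg d (fun v ω => (Y v ω : ℝ)) r ω) atTop (𝓝 (H ω))) :
    (∀ s : ℝ, Summable (fun j : ℤ => Real.exp (s * j) * p j)) ∧
    (∀ s : ℝ,
      ∑' j : ℤ, Real.exp (s * j) * p j =
        Real.exp (s ^ 2 / (4 * β)) *
          (∑' j : ℤ, Real.exp (-β * ((j : ℝ) - s / (2 * β)) ^ 2)) /
          (∑' j : ℤ, Real.exp (-β * (j : ℝ) ^ 2))) ∧
    (∀ A : ℝ, 0 < A →
      ∃ B : ℝ, 0 ≤ B ∧ ∀ s : ℝ, 0 ≤ s →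
        P {ω | s ≤ |H ω|} ≤ ENNReal.ofReal (B * Real.exp (-A * s))) := by
  obtain rfl : p = discreteGaussianPMFReal β := funext hp
  refine ⟨summable_exp_mul_discreteGaussianPMFReal hβ,
    tsum_exp_mul_discreteGaussianPMFReal hβ.ne', fun A hA => ?_⟩
  have hY (v : Vertex d) :
      HasSubgaussianMGF (fun ω => (Y v ω : ℝ)) (Real.toNNReal (1 / (2 * β))) P := by
    refine .of_map (hmeas v).aemeasurable (hasSubgaussianMGF_discreteGaussian hβ fun j => ?_)
    rw [Measure.map_apply (hmeas v) (measurableSet_singleton j)]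
    exact hlaw v j
  have hindep' : iIndepFun (fun v ω => (Y v ω : ℝ)) P :=
    hindep.comp (fun _ j => (j : ℝ)) fun _ => measurable_from_top
  have hHsub : HasSubgaussianMGF H (Real.toNNReal (1 / (2 * β))) P :=
    hasSubgaussianMGF_of_tendsto_sphAvg hd hindep' hY hH
  exact ⟨_, by positivity, fun s _ => measure_abs_ge_le_of_hasSubgaussianMGF hHsub hA.le s⟩
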